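/- arXiv:2601.03128 — 5 statements merged into one kernel-verified Lean document; each statement's English description precedes it below -/
import Mathlib

section
/- Let C be a braided multiring category over a field k and let M be a left C-module category. For any nonzero object X of C, the full subcategory Ann_M(X) := {M ∈ M | X ⊗ M ≅ 0} is a Serre submodule category of M; that is, it is a Serre subcategory of M and Y ⊗ N ∈ Ann_M(X) for every Y ∈ C and N ∈ Ann_M(X). -/
/-!
STATEMENT 2: Let `C` be a braided multiring category over a field `k` and `M` a left
`C`-module category. For any nonzero object `X` of `C`, the full subcategory
`Ann_M(X) = {m ∈ M | X ⊗ m ≅ 0}` is a Serre submodule category of `M`: it is a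
Serre subcategory of `M` and is closed under the action of `C`.
-/

open CategoryTheory Category Limits MonoidalCategory

namespace DerivedModule

/-- A left module category structure on `M` over a monoidal category `C`:
a module product bifunctor together with coherent associativity and unit
isomorphisms (pentagon and triangle axioms). -/
structure ModuleStruct (C : Type*) [Category C] [MonoidalCategory C]
    (M : Type*) [Category M] where
  /-- the module product bifunctor `⊗ : C × M → M` -/
  act : C ⥤ M ⥤ M
  /-- the associativity isomorphism `(X ⊗ Y) ⊗ m ≅ X ⊗ (Y ⊗ m)` -/
  assocIso (X Y : C) : act.obj (X ⊗ Y) ≅ act.obj Y ⋙ act.obj X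
  /-- the unit isomorphism `𝟙 ⊗ m ≅ m` -/
  unitIso : act.obj (𝟙_ C) ≅ 𝟭 M
  assoc_natural : ∀ {X X' Y Y' : C} (f : X ⟶ X') (g : Y ⟶ Y') (m : M),
    (act.map (f ⊗ₘ g)).app m ≫ (assocIso X' Y').hom.app m =
      (assocIso X Y).hom.app m ≫ (act.map f).app ((act.obj Y).obj m) ≫
        (act.obj X').map ((act.map g).app m)
  pentagon : ∀ (X Y Z : C) (m : M),
    (act.map (α_ X Y Z).hom).app m ≫ (assocIso X (Y ⊗ Z)).hom.app m ≫
        (act.obj X).map ((assocIso Y Z).hom.app m) =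
      (assocIso (X ⊗ Y) Z).hom.app m ≫ (assocIso X Y).hom.app ((act.obj Z).obj m)
  triangle : ∀ (X : C) (m : M),
    (act.map (ρ_ X).hom).app m =
      (assocIso X (𝟙_ C)).hom.app m ≫ (act.obj X).map (unitIso.hom.app m)

/-- A module category over a multiring category: the module product bifunctor is,
in addition, `k`-bilinear on morphisms and exact in each variable. -/
structure AbelianModuleStruct (k : Type*) [Field k] (C : Type*) [Category C] [Abelian C]
    [Linear k C] [MonoidalCategory C]
    (M : Type*) [Category M] [Abelian M] [Linear k M] extends ModuleStruct C M where
  additive_obj (X : C) : (act.obj X).Additive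
  linear_obj (X : C) : (act.obj X).Linear k
  additive_flip (m : M) : (act.flip.obj m).Additive
  linear_flip (m : M) : (act.flip.obj m).Linear k
  exact_limits_obj (X : C) : PreservesFiniteLimits (act.obj X)
  exact_colimits_obj (X : C) : PreservesFiniteColimits (act.obj X)
  exact_limits_flip (m : M) : PreservesFiniteLimits (act.flip.obj m)
  exact_colimits_flip (m : M) : PreservesFiniteColimits (act.flip.obj m)

/-- A Serre subcategory of an abelian category, given as a predicate on objects:
a full (isomorphism-closed) subcategory closed under subobjects, quotients and
extensions. -/
structure IsSerreSubcategory {A : Type*} [Category A] [Abelian A] (P : A → Prop) : Prop where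
  of_iso : ∀ {X Y : A}, (X ≅ Y) → P X → P Y
  of_mono : ∀ {X Y : A} (f : X ⟶ Y), Mono f → P Y → P X
  of_epi : ∀ {X Y : A} (f : X ⟶ Y), Epi f → P X → P Y
  of_shortExact : ∀ (S : ShortComplex A), S.ShortExact → P S.X₁ → P S.X₃ → P S.X₂

end DerivedModule

open DerivedModule

namespace DerivedModule

lemma IsSerreSubcategory.of_isSerreClass {A : Type*} [Category A] [Abelian A]
    (P : ObjectProperty A) [P.IsSerreClass] : IsSerreSubcategory P where
  of_iso e := P.prop_of_iso e
  of_mono f _ := P.prop_of_mono f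
  of_epi f _ := P.prop_of_epi f
  of_shortExact _ hS := P.prop_X₂_of_shortExact hS

namespace ModuleStruct

variable {C : Type*} [Category C] [MonoidalCategory C] {M : Type*} [Category M]

/-- The isomorphism `X ⊗ (Y ⊗ m) ≅ Y ⊗ (X ⊗ m)`, natural in `m`, by which the actions of two
objects of a braided monoidal category commute. -/
def actCommIso [BraidedCategory C] (mod : ModuleStruct C M) (X Y : C) :
    mod.act.obj Y ⋙ mod.act.obj X ≅ mod.act.obj X ⋙ mod.act.obj Y :=
  (mod.assocIso X Y).symm ≪≫ mod.act.mapIso (β_ X Y) ≪≫ mod.assocIso Y X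

/-- The annihilator `Ann_M(X)`, as a property of objects of `M`: the kernel of the endofunctor
`X ⊗ -`. The condition `X ⊗ m ≅ 0` is expressed as `X ⊗ m` being a zero object. -/
abbrev annihilator (mod : ModuleStruct C M) (X : C) : ObjectProperty M :=
  (mod.act.obj X).kernel

lemma annihilator_act [BraidedCategory C] [HasZeroMorphisms M] (mod : ModuleStruct C M)
    (X Y : C) [(mod.act.obj Y).PreservesZeroMorphisms] {m : M} (hm : mod.annihilator X m) :
    mod.annihilator X ((mod.act.obj Y).obj m) :=
  ((mod.act.obj Y).map_isZero hm).of_iso ((mod.actCommIso X Y).app m)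

end ModuleStruct

attribute [instance] AbelianModuleStruct.additive_obj AbelianModuleStruct.exact_limits_obj
  AbelianModuleStruct.exact_colimits_obj

end DerivedModule

theorem annihilator_in_module_isSerreSubmodule_general
    {C : Type*} [Category C] [MonoidalCategory C] [BraidedCategory C]
    {M : Type*} [Category M] [Abelian M] (mod : ModuleStruct C M)
    [∀ Y : C, (mod.act.obj Y).PreservesZeroMorphisms] (X : C)
    [PreservesFiniteLimits (mod.act.obj X)] [PreservesFiniteColimits (mod.act.obj X)] :
    IsSerreSubcategory (mod.annihilator X) ∧
      ∀ (Y : C) (m : M), mod.annihilator X m → mod.annihilator X ((mod.act.obj Y).obj m) :=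
  ⟨.of_isSerreClass _, fun Y _ ↦ mod.annihilator_act X Y⟩

/-- Over a braided multiring category `C`, the annihilator
`Ann_M(X)` of a nonzero object `X ∈ C` in a left `C`-module category `M` is a Serre
submodule category of `M`. -/
theorem annihilator_in_module_isSerreSubmodule
    (k : Type*) [Field k]
    (C : Type*) [Category C] [Abelian C] [Linear k C] [MonoidalCategory C]
    [BraidedCategory C]
    [MonoidalPreadditive C] [MonoidalLinear k C]
    [∀ X : C, PreservesFiniteLimits (tensorLeft X)]
    [∀ X : C, PreservesFiniteColimits (tensorLeft X)]
    [∀ X : C, PreservesFiniteLimits (tensorRight X)]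
    [∀ X : C, PreservesFiniteColimits (tensorRight X)]
    (M : Type*) [Category M] [Abelian M] [Linear k M]
    (mod : AbelianModuleStruct k C M)
    (X : C) (hX : ¬ Limits.IsZero X) :
    IsSerreSubcategory (fun m : M => Limits.IsZero ((mod.act.obj X).obj m)) ∧
      (∀ (Y : C) (m : M), Limits.IsZero ((mod.act.obj X).obj m) →
        Limits.IsZero ((mod.act.obj X).obj ((mod.act.obj Y).obj m))) :=
  annihilator_in_module_isSerreSubmodule_general mod.toModuleStruct X
end

section
/- Let T be a monoidal triangulated category, K a left triangulated module category over T, J a two-sided thick ideal of T, and L a thick T-submodule category of K. If J ⊗ M ∈ L for all J ∈ J and M ∈ K, then the Verdier quotient K/L carries the structure of a left triangulated module category over the Verdier quotient T/J. -/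
/-!
STATEMENT 8: Let `T` be a monoidal triangulated category, `K` a left triangulated
module category over `T`, `J` a two-sided thick ideal of `T`, and `L` a thick
`T`-submodule category of `K`. If `J ⊗ M ∈ L` for all `J ∈ J` and `M ∈ K`, then the
Verdier quotient `K/L` carries the structure of a left triangulated module category
over the Verdier quotient `T/J`.

The Verdier quotients are encoded as localizations with respect to the class of
morphisms whose cone lies in the corresponding thick subcategory (`thickW`); the
resulting module structure is compatible with the quotient functors.
-/

open CategoryTheory Category Limits Pretriangulated MonoidalCategory ZeroObject
open CategoryTheory.Triangulated

namespace DerivedModule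

section Triangulated

variable (T : Type*) [Category T] [HasZeroObject T] [Preadditive T] [HasShift T ℤ]
  [∀ n : ℤ, (shiftFunctor T n).Additive] [Pretriangulated T]

/-- A monoidal triangulated category: a pretriangulated category with a monoidal
structure whose tensor product is a triangulated functor in each variable. -/
class MonoidalTriangulated [MonoidalCategory T] where
  additiveLeft (X : T) : (tensorLeft X).Additive
  additiveRight (X : T) : (tensorRight X).Additive
  commShiftLeft (X : T) : (tensorLeft X).CommShift ℤ
  commShiftRight (X : T) : (tensorRight X).CommShift ℤ
  triangulatedLeft (X : T) : letI := commShiftLeft X; (tensorLeft X).IsTriangulated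
  triangulatedRight (X : T) : letI := commShiftRight X; (tensorRight X).IsTriangulated

variable (K : Type*) [Category K] [HasZeroObject K] [Preadditive K] [HasShift K ℤ]
  [∀ n : ℤ, (shiftFunctor K n).Additive] [Pretriangulated K]

/-- A left triangulated module category structure on a pretriangulated category `K`
over a monoidal triangulated category `T`: a `T`-module structure whose module
product bifunctor is a triangulated functor in each variable. -/
structure TriangulatedModuleStruct [MonoidalCategory T] extends ModuleStruct T K where
  additive_obj (X : T) : (act.obj X).Additive
  commShift_obj (X : T) : (act.obj X).CommShift ℤ
  triangulated_obj (X : T) : letI := commShift_obj X; (act.obj X).IsTriangulated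
  additive_flip (m : K) : (act.flip.obj m).Additive
  commShift_flip (m : K) : (act.flip.obj m).CommShift ℤ
  triangulated_flip (m : K) : letI := commShift_flip m; (act.flip.obj m).IsTriangulated

variable {K}

/-- A thick subcategory of a pretriangulated category, as a predicate on objects:
a triangulated subcategory closed under direct summands. -/
structure IsThickSubcategory [HasBinaryBiproducts K] (P : K → Prop) : Prop where
  zero : P 0
  of_iso : ∀ {X Y : K}, (X ≅ Y) → P X → P Y
  shift : ∀ (X : K) (n : ℤ), P X → P (X⟦n⟧)
  ext₂ : ∀ (Tr : Triangle K), (Tr ∈ distTriang K) → P Tr.obj₁ → P Tr.obj₃ → P Tr.obj₂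
  of_summand : ∀ (X Y : K), P (X ⊞ Y) → P X

/-- The class of morphisms whose cone lies in the given subcategory; inverting them
yields the Verdier quotient. -/
def thickW (P : K → Prop) : MorphismProperty K :=
  fun X Y f => ∃ (Z : K) (g : Y ⟶ Z) (h : Z ⟶ X⟦(1 : ℤ)⟧),
    (Triangle.mk f g h ∈ distTriang K) ∧ P Z

end Triangulated

end DerivedModule

open DerivedModule

/-!
The product of `X ∈ T` and `m ∈ K`, composed with `K ⥤ K/L`, inverts the morphisms with cone in `J`
in the variable `X` (as `J ⊗ K ⊆ L`) and those with cone in `L` in the variable `m` (as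
`T ⊗ L ⊆ L`), hence descends to a bifunctor on `T/J × K/L`. The coherence isomorphisms are
transported in two steps: first along `K ⥤ K/L`, where two natural transformations between functors
on `K/L` agree as soon as they agree on the image of `K`, then along `T ⥤ T/J`, where an action is
regarded as a monoidal functor to endofunctors and the universal property of monoidal localizations
applies. Finally, a functor on a Verdier quotient is triangulated if its restriction is, because
every morphism of the quotient is isomorphic to the image of a morphism; as the quotient functors
are essentially surjective, this can be checked on the products with objects coming from `T` and
`K`.
-/

namespace DerivedModule

section MultiplicativeClosure

variable {C : Type*} [Category C] {W : MorphismProperty C}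

lemma multiplicativeClosure_exists_comp_eq
    (ore : ∀ ⦃X Y X' : C⦄ (s : X ⟶ Y) (f : X ⟶ X'), W s →
      ∃ (Y' : C) (s' : X' ⟶ Y') (f' : Y ⟶ Y'), W s' ∧ f ≫ s' = s ≫ f')
    {X Y : C} {s : X ⟶ Y} (hs : W.multiplicativeClosure s) {X' : C} (f : X ⟶ X') :
    ∃ (Y' : C) (s' : X' ⟶ Y') (f' : Y ⟶ Y'),
      W.multiplicativeClosure s' ∧ f ≫ s' = s ≫ f' := by
  induction hs with
  | of s hs =>
    obtain ⟨Y', s', f', hs', comm⟩ := ore s f hs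
    exact ⟨Y', s', f', .of _ hs', comm⟩
  | id X => exact ⟨X', 𝟙 X', f, .id _, by simp⟩
  | comp_of s t _ ht ih =>
    obtain ⟨Y', s', f', hs', comm⟩ := ih f
    obtain ⟨Y'', t', f'', ht', comm'⟩ := ore t f' ht
    exact ⟨Y'', s' ≫ t', f'', .comp_of _ _ hs' ht', by rw [reassoc_of% comm, comm', assoc]⟩

lemma multiplicativeClosure_exists_coequalizing
    (ext : ∀ ⦃X' X Y : C⦄ (s : X' ⟶ X) (f₁ f₂ : X ⟶ Y), W s → s ≫ f₁ = s ≫ f₂ →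
      ∃ (Y' : C) (t : Y ⟶ Y'), W t ∧ f₁ ≫ t = f₂ ≫ t)
    {X' X : C} {s : X' ⟶ X} (hs : W.multiplicativeClosure s) {Y : C} (f₁ f₂ : X ⟶ Y)
    (h : s ≫ f₁ = s ≫ f₂) :
    ∃ (Y' : C) (t : Y ⟶ Y'), W.multiplicativeClosure t ∧ f₁ ≫ t = f₂ ≫ t := by
  induction hs generalizing Y with
  | of s hs =>
    obtain ⟨Y', t, ht, comm⟩ := ext s f₁ f₂ hs h
    exact ⟨Y', t, .of _ ht, comm⟩
  | id X => exact ⟨Y, 𝟙 Y, .id _, by simpa using h⟩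
  | comp_of s t _ ht ih =>
    obtain ⟨Y', u, hu, comm⟩ := ih (t ≫ f₁) (t ≫ f₂) (by simpa using h)
    obtain ⟨Y'', v, hv, comm'⟩ := ext t (f₁ ≫ u) (f₂ ≫ u) ht (by simpa using comm)
    exact ⟨Y'', u ≫ v, .comp_of _ _ hu hv, by simpa using comm'⟩

lemma multiplicativeClosure_hasLeftCalculusOfFractions
    (ore : ∀ ⦃X Y X' : C⦄ (s : X ⟶ Y) (f : X ⟶ X'), W s →
      ∃ (Y' : C) (s' : X' ⟶ Y') (f' : Y ⟶ Y'), W s' ∧ f ≫ s' = s ≫ f')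
    (ext : ∀ ⦃X' X Y : C⦄ (s : X' ⟶ X) (f₁ f₂ : X ⟶ Y), W s → s ≫ f₁ = s ≫ f₂ →
      ∃ (Y' : C) (t : Y ⟶ Y'), W t ∧ f₁ ≫ t = f₂ ≫ t) :
    W.multiplicativeClosure.HasLeftCalculusOfFractions where
  exists_leftFraction _ _ φ := by
    obtain ⟨_, s', f', hs', comm⟩ := multiplicativeClosure_exists_comp_eq ore φ.hs φ.f
    exact ⟨.mk f' s' hs', comm⟩
  ext _ _ _ f₁ f₂ _ hs h := by
    obtain ⟨Y', t, ht, comm⟩ := multiplicativeClosure_exists_coequalizing ext hs f₁ f₂ h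
    exact ⟨Y', t, ht, comm⟩

lemma isLocalization_multiplicativeClosure {D : Type*} [Category D] (Q : C ⥤ D)
    (W : MorphismProperty C) [Q.IsLocalization W] :
    Q.IsLocalization W.multiplicativeClosure := by
  have inverts : W.multiplicativeClosure ≤ (MorphismProperty.isomorphisms D).inverseImage Q :=
    (W.multiplicativeClosure_le_iff _).2 (Localization.inverts Q W)
  have : (𝟭 D).IsLocalization (⊥ : MorphismProperty D) := .for_id _ bot_le
  exact Functor.IsLocalization.comp Q (𝟭 D) W ⊥ _ (fun _ _ f hf ↦ inverts f hf)
    W.le_multiplicativeClosure bot_le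

end MultiplicativeClosure

section VerdierQuotient

variable {C D E : Type*} [Category C] [HasZeroObject C] [Preadditive C] [HasShift C ℤ]
  [∀ n : ℤ, (shiftFunctor C n).Additive] [Pretriangulated C]
  [Category D] [HasZeroObject D] [Preadditive D] [HasShift D ℤ]
  [∀ n : ℤ, (shiftFunctor D n).Additive] [Pretriangulated D]
  [Category E] [HasZeroObject E] [Preadditive E] [HasShift E ℤ]
  [∀ n : ℤ, (shiftFunctor E n).Additive] [Pretriangulated E]

lemma IsThickSubcategory.isTriangulated [HasBinaryBiproducts C] {P : ObjectProperty C}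
    (hP : IsThickSubcategory P) : P.IsTriangulated where
  exists_zero := ⟨0, isZero_zero C, hP.zero⟩
  isStableUnderShiftBy n := ⟨fun X hX ↦ hP.shift X n hX⟩
  ext₂' Tr hTr h₁ h₃ := P.le_isoClosure _ (hP.ext₂ Tr hTr h₁ h₃)

lemma thickW_eq_trW (P : ObjectProperty C) : thickW P = P.trW := by
  ext X Y f
  simp only [thickW, ObjectProperty.trW, exists_prop]

lemma trW_exists_comp_eq (P : ObjectProperty C) {X Y X' : C} (s : X ⟶ Y) (f : X ⟶ X')
    (hs : P.trW s) :
    ∃ (Y' : C) (s' : X' ⟶ Y') (f' : Y ⟶ Y'), P.trW s' ∧ f ≫ s' = s ≫ f' := by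
  obtain ⟨Z, _, h, dist, hZ⟩ := hs
  obtain ⟨Y', s', _, dist'⟩ := distinguished_cocone_triangle₂ (h ≫ f⟦1⟧')
  obtain ⟨f', comm, _⟩ :=
    complete_distinguished_triangle_morphism₂ _ _ dist dist' f (𝟙 Z) (Category.id_comp _).symm
  exact ⟨Y', s', f', ⟨_, _, _, dist', hZ⟩, comm.symm⟩

lemma trW_exists_coequalizing (P : ObjectProperty C) [P.IsStableUnderShift ℤ] {X' X Y : C}
    (s : X' ⟶ X) (f₁ f₂ : X ⟶ Y) (hs : P.trW s) (h : s ≫ f₁ = s ≫ f₂) :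
    ∃ (Y' : C) (t : Y ⟶ Y'), P.trW t ∧ f₁ ≫ t = f₂ ≫ t := by
  obtain ⟨Z, g, _, dist, hZ⟩ := hs
  have comp_sub_eq_zero : s ≫ (f₁ - f₂) = 0 := by rw [Preadditive.comp_sub, h, sub_self]
  obtain ⟨q, hq⟩ : ∃ q : Z ⟶ Y, f₁ - f₂ = g ≫ q :=
    Triangle.yoneda_exact₂ _ dist _ comp_sub_eq_zero
  obtain ⟨Y', t, _, dist'⟩ := distinguished_cocone_triangle q
  have hqt : q ≫ t = 0 := comp_distTriang_mor_zero₁₂ _ dist'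
  exact ⟨Y', t, .mk' P dist' hZ,
    by rw [← sub_eq_zero, ← Preadditive.sub_comp, hq, assoc, hqt, comp_zero]⟩

-- Without the octahedral axiom `P.trW` need not be closed under composition, so that the calculus
-- of fractions is only available for its multiplicative closure.
lemma essSurj_mapArrow_of_isLocalization_trW {D : Type*} [Category D] (P : ObjectProperty C)
    [P.IsStableUnderShift ℤ] (Q : C ⥤ D) [Q.IsLocalization P.trW] : Q.mapArrow.EssSurj := by
  have := isLocalization_multiplicativeClosure Q P.trW
  have := multiplicativeClosure_hasLeftCalculusOfFractions
    (fun _ _ _ ↦ trW_exists_comp_eq P) (fun _ _ _ ↦ trW_exists_coequalizing P)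
  exact Localization.essSurj_mapArrow Q P.trW.multiplicativeClosure

/-- A functor between pretriangulated categories is *triangulable* if it can be equipped with
the structure of a triangulated functor. The commutation with the shift is not part of the data,
so that this is a property of the functor which can be checked one variable at a time. -/
def IsTriangulable (F : C ⥤ D) : Prop :=
  ∃ _ : F.CommShift ℤ, F.IsTriangulated

lemma isTriangulable (F : C ⥤ D) [F.CommShift ℤ] [F.IsTriangulated] : IsTriangulable F :=
  ⟨inferInstance, inferInstance⟩

namespace IsTriangulable

lemma additive {F : C ⥤ D} (hF : IsTriangulable F) : F.Additive := by
  obtain ⟨_, _⟩ := hF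
  infer_instance

lemma trW_map {F : C ⥤ D} (hF : IsTriangulable F) {P : ObjectProperty C} {R : ObjectProperty D}
    (h : P ≤ R.inverseImage F) {X Y : C} {f : X ⟶ Y} (hf : P.trW f) : R.trW (F.map f) := by
  obtain ⟨_, _⟩ := hF
  obtain ⟨Z, _, _, dist, hZ⟩ := hf
  exact .mk R (F.map_distinguished _ dist) (h Z hZ)

lemma comp {F : C ⥤ D} {G : D ⥤ E} (hF : IsTriangulable F) (hG : IsTriangulable G) :
    IsTriangulable (F ⋙ G) := by
  obtain ⟨_, _⟩ := hF
  obtain ⟨_, _⟩ := hG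
  exact isTriangulable _

lemma of_iso {F G : C ⥤ D} (hF : IsTriangulable F) (e : F ≅ G) : IsTriangulable G := by
  obtain ⟨_, _⟩ := hF
  let := Functor.CommShift.ofIso e ℤ
  have := Functor.CommShift.ofIso_compatibility e ℤ
  exact ⟨inferInstance, (Functor.isTriangulated_iff_of_iso e).1 inferInstance⟩

lemma of_lifting (P : ObjectProperty C) [P.IsStableUnderShift ℤ] (Q : C ⥤ D)
    [Q.IsLocalization P.trW] [Q.CommShift ℤ] [Q.IsTriangulated] {G : C ⥤ E}
    (hG : IsTriangulable G) (F : D ⥤ E) [Localization.Lifting Q P.trW G F] :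
    IsTriangulable F := by
  obtain ⟨_, _⟩ := hG
  let := Functor.commShiftOfLocalization Q P.trW ℤ G F
  have := essSurj_mapArrow_of_isLocalization_trW P Q
  exact ⟨inferInstance,
    Functor.isTriangulated_of_precomp_iso (Localization.Lifting.iso Q P.trW G F)⟩

lemma obj_of_lifting₂ {C₁ D₁ : Type*} [Category C₁] [Category D₁] (W : MorphismProperty C₁)
    (Q₁ : C₁ ⥤ D₁) [Q₁.EssSurj] (P : ObjectProperty C) [P.IsStableUnderShift ℤ] (Q : C ⥤ D)
    [Q.IsLocalization P.trW] [Q.CommShift ℤ] [Q.IsTriangulated] {G : C₁ ⥤ C ⥤ E}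
    (hG : ∀ X, IsTriangulable (G.obj X)) (F : D₁ ⥤ D ⥤ E)
    [Localization.Lifting₂ Q₁ Q W P.trW G F] (Y : D₁) : IsTriangulable (F.obj Y) := by
  let := Localization.Lifting₂.fst Q₁ Q W P.trW G F (Q₁.objPreimage Y)
  exact (of_lifting P Q (hG (Q₁.objPreimage Y)) (F.obj (Q₁.obj (Q₁.objPreimage Y)))).of_iso
    (F.mapIso (Q₁.objObjPreimageIso Y))

end IsTriangulable

end VerdierQuotient

namespace ModuleStruct

section MonoidalLeftAction

variable {C M : Type*} [Category C] [MonoidalCategory C] [Category M]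

/-- A left action in the sense of Mathlib, as a module category structure. -/
def ofMonoidalLeftAction [MonoidalLeftAction C M] : ModuleStruct C M where
  act := MonoidalLeftAction.curriedAction C M
  assocIso X Y := NatIso.ofComponents (fun m ↦ MonoidalLeftAction.actionAssocIso X Y m) (by
    intro m n f
    have h := MonoidalLeftAction.actionAssocIso_hom_naturality (𝟙 X) (𝟙 Y) f
    simp only [MonoidalLeftAction.actionHom_def, id_tensorHom_id,
      MonoidalLeftAction.id_actionHomLeft, Category.id_comp] at h
    exact h)
  unitIso := MonoidalLeftAction.actionUnitNatIso C M
  assoc_natural f g m := by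
    have h := MonoidalLeftAction.actionAssocIso_hom_naturality f g (𝟙 m)
    simp only [MonoidalLeftAction.actionHom_def, MonoidalLeftAction.actionHomRight_id,
      Category.comp_id] at h
    exact h
  pentagon := MonoidalLeftAction.associator_actionHom
  triangle := MonoidalLeftAction.rightUnitor_actionHom

variable (ms : ModuleStruct C M)

-- As for monoidal categories (Kelly), the left unit coherence follows from the pentagon and the
-- triangle: it suffices to prove it after acting by `𝟙_ C`.
lemma leftUnitor (X : C) (m : M) :
    (ms.act.map (λ_ X).hom).app m =
      (ms.assocIso (𝟙_ C) X).hom.app m ≫ ms.unitIso.hom.app ((ms.act.obj X).obj m) := by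
  have : (ms.act.obj (𝟙_ C)).Faithful := .of_iso ms.unitIso.symm
  apply (ms.act.obj (𝟙_ C)).map_injective
  have pentagon := ms.pentagon (𝟙_ C) (𝟙_ C) X m
  have triangle := ms.triangle (𝟙_ C) ((ms.act.obj X).obj m)
  have naturality_left := ms.assoc_natural (ρ_ (𝟙_ C)).hom (𝟙 X) m
  have naturality_right := ms.assoc_natural (𝟙 (𝟙_ C)) (λ_ X).hom m
  simp only [CategoryTheory.Functor.map_id, NatTrans.id_app, Category.comp_id]
    at naturality_left naturality_right
  rw [tensorHom_id, ← MonoidalCategory.triangle, ← id_tensorHom, Functor.map_comp,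
    NatTrans.comp_app, assoc, naturality_right, triangle, ← reassoc_of% pentagon, cancel_epi,
    cancel_epi] at naturality_left
  rw [Functor.map_comp]
  exact (Category.id_comp _).symm.trans naturality_left

/-- A module category structure, as a left action in the sense of Mathlib. -/
@[reducible]
def toMonoidalLeftAction : MonoidalLeftAction C M where
  actionObj X m := (ms.act.obj X).obj m
  actionHomLeft f m := (ms.act.map f).app m
  actionHomRight X _ _ f := (ms.act.obj X).map f
  actionAssocIso X Y m := (ms.assocIso X Y).app m
  actionUnitIso m := ms.unitIso.app m
  actionHom_def _ _ := rfl
  actionHomRight_id _ _ := by simp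
  id_actionHomLeft _ _ := by simp
  actionHom_comp _ _ _ _ := by simp
  actionAssocIso_hom_naturality {_ _ _ _ m _} f g h := by
    simp [reassoc_of% (ms.assoc_natural f g m)]
  actionUnitIso_hom_naturality f := (ms.unitIso.hom.naturality f).symm
  whiskerLeft_actionHomLeft X Y Y' f m := by
    simp [← cancel_mono ((ms.assocIso X Y').hom.app m), ← id_tensorHom, ms.assoc_natural]
  whiskerRight_actionHomLeft {X X'} Y f m := by
    simp [← cancel_mono ((ms.assocIso X' Y).hom.app m), ← tensorHom_id, ms.assoc_natural]
  associator_actionHom := ms.pentagon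
  leftUnitor_actionHom := ms.leftUnitor
  rightUnitor_actionHom := ms.triangle

end MonoidalLeftAction

section LocalizeModule

variable {C M M' : Type*} [Category C] [MonoidalCategory C] [Category M] [Category M']
  (ms : ModuleStruct C M) (Q : M ⥤ M') (W : MorphismProperty M) [Q.IsLocalization W]
  {A : C ⥤ M' ⥤ M'} (e : A ⋙ (Functor.whiskeringLeft M M' M').obj Q ≅
    ms.act ⋙ (Functor.whiskeringRight M M M').obj Q)

/-- The isomorphism `X ⊗ Q m ≅ Q (X ⊗ m)` expressing that `Q` commutes with the products. -/
def comparison (X : C) (m : M) : (A.obj X).obj (Q.obj m) ≅ Q.obj ((ms.act.obj X).obj m) :=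
  (e.app X).app m

lemma comparison_naturality_left {X Y : C} (f : X ⟶ Y) (m : M) :
    (A.map f).app (Q.obj m) ≫ (ms.comparison Q e Y m).hom =
      (ms.comparison Q e X m).hom ≫ Q.map ((ms.act.map f).app m) :=
  congr_app (e.hom.naturality f) m

lemma comparison_naturality_right (X : C) {m n : M} (f : m ⟶ n) :
    (A.obj X).map (Q.map f) ≫ (ms.comparison Q e X n).hom =
      (ms.comparison Q e X m).hom ≫ Q.map ((ms.act.obj X).map f) :=
  (e.hom.app X).naturality f

/-- The associativity isomorphism on the localized module category. -/
noncomputable def localizeAssocIso (X Y : C) : A.obj (X ⊗ Y) ≅ A.obj Y ⋙ A.obj X :=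
  Localization.liftNatIso Q W (Q ⋙ A.obj (X ⊗ Y)) (Q ⋙ A.obj Y ⋙ A.obj X) _ _
    (e.app (X ⊗ Y) ≪≫ Functor.isoWhiskerRight (ms.assocIso X Y) Q ≪≫
      Functor.isoWhiskerLeft (ms.act.obj Y) (e.app X).symm ≪≫
      Functor.isoWhiskerRight (e.app Y).symm (A.obj X))

/-- The unit isomorphism on the localized module category. -/
noncomputable def localizeUnitIso : A.obj (𝟙_ C) ≅ 𝟭 M' :=
  Localization.liftNatIso Q W (Q ⋙ A.obj (𝟙_ C)) Q _ _
    (e.app (𝟙_ C) ≪≫ Functor.isoWhiskerRight ms.unitIso Q ≪≫ Q.leftUnitor)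

lemma localizeAssocIso_hom_app_comparison (X Y : C) (m : M) :
    (ms.localizeAssocIso Q W e X Y).hom.app (Q.obj m) ≫
        (A.obj X).map (ms.comparison Q e Y m).hom ≫
        (ms.comparison Q e X ((ms.act.obj Y).obj m)).hom =
      (ms.comparison Q e (X ⊗ Y) m).hom ≫ Q.map ((ms.assocIso X Y).hom.app m) := by
  have hom_app : (ms.localizeAssocIso Q W e X Y).hom.app (Q.obj m) =
      (ms.comparison Q e (X ⊗ Y) m).hom ≫ Q.map ((ms.assocIso X Y).hom.app m) ≫
        (ms.comparison Q e X ((ms.act.obj Y).obj m)).inv ≫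
        (A.obj X).map (ms.comparison Q e Y m).inv := by
    simp [localizeAssocIso, comparison]
  simp only [hom_app, assoc, Iso.map_inv_hom_id_assoc, Iso.inv_hom_id, Category.comp_id]

lemma localizeUnitIso_hom_app (m : M) :
    (ms.localizeUnitIso Q W e).hom.app (Q.obj m) =
      (ms.comparison Q e (𝟙_ C) m).hom ≫ Q.map (ms.unitIso.hom.app m) := by
  simp [localizeUnitIso, comparison]

lemma localizeAssocIso_natural {X X' Y Y' : C} (f : X ⟶ X') (g : Y ⟶ Y') :
    A.map (f ⊗ₘ g) ≫ (ms.localizeAssocIso Q W e X' Y').hom =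
      (ms.localizeAssocIso Q W e X Y).hom ≫ Functor.whiskerLeft (A.obj Y) (A.map f) ≫
        Functor.whiskerRight (A.map g) (A.obj X') := by
  refine Localization.natTrans_ext Q W fun m ↦ ?_
  dsimp
  rw [← cancel_mono ((A.obj X').map (ms.comparison Q e Y' m).hom ≫
    (ms.comparison Q e X' ((ms.act.obj Y').obj m)).hom)]
  calc
    _ = (ms.comparison Q e (X ⊗ Y) m).hom ≫
        Q.map ((ms.act.map (f ⊗ₘ g)).app m ≫ (ms.assocIso X' Y').hom.app m) := by
      rw [assoc, localizeAssocIso_hom_app_comparison,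
        reassoc_of% (ms.comparison_naturality_left Q e (f ⊗ₘ g) m), ← Functor.map_comp]
    _ = (ms.comparison Q e (X ⊗ Y) m).hom ≫ Q.map ((ms.assocIso X Y).hom.app m ≫
          (ms.act.map f).app ((ms.act.obj Y).obj m) ≫
            (ms.act.obj X').map ((ms.act.map g).app m)) := by
      rw [ms.assoc_natural]
    _ = _ := by
      simp only [assoc]
      rw [← Functor.map_comp_assoc (A.obj X'), comparison_naturality_left, Functor.map_comp_assoc,
        comparison_naturality_right, ← (A.map f).naturality_assoc,
        reassoc_of% (ms.comparison_naturality_left Q e f), Functor.map_comp, Functor.map_comp,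
        ← reassoc_of% (ms.localizeAssocIso_hom_app_comparison Q W e)]

lemma localizeAssocIso_pentagon (X Y Z : C) :
    A.map (α_ X Y Z).hom ≫ (ms.localizeAssocIso Q W e X (Y ⊗ Z)).hom ≫
        Functor.whiskerRight (ms.localizeAssocIso Q W e Y Z).hom (A.obj X) =
      (ms.localizeAssocIso Q W e (X ⊗ Y) Z).hom ≫
        Functor.whiskerLeft (A.obj Z) (ms.localizeAssocIso Q W e X Y).hom := by
  refine Localization.natTrans_ext Q W fun m ↦ ?_
  dsimp
  rw [← cancel_mono ((A.obj X).map ((A.obj Y).map (ms.comparison Q e Z m).hom ≫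
      (ms.comparison Q e Y ((ms.act.obj Z).obj m)).hom) ≫
    (ms.comparison Q e X ((ms.act.obj Y).obj ((ms.act.obj Z).obj m))).hom)]
  have assoc_naturality :=
    (ms.localizeAssocIso Q W e X Y).hom.naturality (ms.comparison Q e Z m).hom
  dsimp at assoc_naturality
  have comparison_naturality : (A.obj X).map (Q.map ((ms.assocIso Y Z).hom.app m)) ≫
      (ms.comparison Q e X ((ms.act.obj Y).obj ((ms.act.obj Z).obj m))).hom =
        (ms.comparison Q e X ((ms.act.obj (Y ⊗ Z)).obj m)).hom ≫
          Q.map ((ms.act.obj X).map ((ms.assocIso Y Z).hom.app m)) :=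
    ms.comparison_naturality_right Q e X _
  calc
    _ = (ms.comparison Q e ((X ⊗ Y) ⊗ Z) m).hom ≫ Q.map ((ms.act.map (α_ X Y Z).hom).app m ≫
        (ms.assocIso X (Y ⊗ Z)).hom.app m ≫ (ms.act.obj X).map ((ms.assocIso Y Z).hom.app m)) := by
      simp only [assoc]
      rw [← Functor.map_comp_assoc (A.obj X), localizeAssocIso_hom_app_comparison,
        Functor.map_comp_assoc (A.obj X), comparison_naturality,
        reassoc_of% (ms.localizeAssocIso_hom_app_comparison Q W e X (Y ⊗ Z) m),
        reassoc_of% (ms.comparison_naturality_left Q e (α_ X Y Z).hom m),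
        Functor.map_comp, Functor.map_comp]
    _ = (ms.comparison Q e ((X ⊗ Y) ⊗ Z) m).hom ≫ Q.map ((ms.assocIso (X ⊗ Y) Z).hom.app m ≫
        (ms.assocIso X Y).hom.app ((ms.act.obj Z).obj m)) := by
      rw [ms.pentagon]
    _ = _ := by
      simp only [Functor.map_comp, assoc]
      rw [← reassoc_of% assoc_naturality, localizeAssocIso_hom_app_comparison,
        reassoc_of% (ms.localizeAssocIso_hom_app_comparison Q W e (X ⊗ Y) Z m)]

lemma localizeAssocIso_triangle (X : C) :
    A.map (ρ_ X).hom = (ms.localizeAssocIso Q W e X (𝟙_ C)).hom ≫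
      Functor.whiskerRight (ms.localizeUnitIso Q W e).hom (A.obj X) := by
  refine Localization.natTrans_ext Q W fun m ↦ ?_
  dsimp
  have comparison_naturality :
      (A.obj X).map (Q.map (ms.unitIso.hom.app m)) ≫ (ms.comparison Q e X m).hom =
        (ms.comparison Q e X _).hom ≫ Q.map ((ms.act.obj X).map (ms.unitIso.hom.app m)) :=
    ms.comparison_naturality_right Q e X _
  rw [← cancel_mono (ms.comparison Q e X m).hom, assoc, comparison_naturality_left,
    localizeUnitIso_hom_app, Functor.map_comp, assoc, comparison_naturality,
    reassoc_of% (ms.localizeAssocIso_hom_app_comparison Q W e X (𝟙_ C) m),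
    ms.triangle, Functor.map_comp]

/-- The module category structure with product `A` induced on the localization `M'` of the module
category `M`, where `e` states that `A` extends the product on `M`. -/
noncomputable def localizeModule : ModuleStruct C M' where
  act := A
  assocIso := ms.localizeAssocIso Q W e
  unitIso := ms.localizeUnitIso Q W e
  assoc_natural f g := congr_app (ms.localizeAssocIso_natural Q W e f g)
  pentagon X Y Z := congr_app (ms.localizeAssocIso_pentagon Q W e X Y Z)
  triangle X := congr_app (ms.localizeAssocIso_triangle Q W e X)

end LocalizeModule

section LocalizeScalars

attribute [local instance] endofunctorMonoidalCategory

variable {C C' M : Type*} [Category C] [MonoidalCategory C] [Category C'] [MonoidalCategory C']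
  [Category M]

/-- The module category structure over the localization `C'` of the monoidal category `C` whose
product is `A`, where `e` states that `A` restricts to the product over `C`. -/
noncomputable def localizeScalars (ms : ModuleStruct C M) (Q : C ⥤ C') (W : MorphismProperty C)
    [Q.IsLocalization W] [W.ContainsIdentities] [Q.Monoidal] {A : C' ⥤ M ⥤ M}
    (e : Q ⋙ A ≅ ms.act) : ModuleStruct C' M :=
  letI := ms.toMonoidalLeftAction
  letI : Localization.Lifting Q W (MonoidalLeftAction.curriedActionMop C M)
      (A ⋙ mopFunctor (M ⥤ M)) := ⟨Functor.isoWhiskerRight e (mopFunctor (M ⥤ M))⟩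
  letI := Localization.Monoidal.functorMonoidalOfComp Q W (A ⋙ mopFunctor (M ⥤ M))
    (MonoidalLeftAction.curriedActionMop C M)
  letI := MonoidalLeftAction.actionOfMonoidalFunctorToEndofunctorMop (A ⋙ mopFunctor (M ⥤ M))
  ofMonoidalLeftAction

end LocalizeScalars

section Localize

variable {C C' M M' : Type*} [Category C] [MonoidalCategory C] [Category C'] [MonoidalCategory C']
  [Category M] [Category M']

lemma exists_localization (ms : ModuleStruct C M) (QC : C ⥤ C') (QM : M ⥤ M')
    (WC : MorphismProperty C) (WM : MorphismProperty M) [WC.ContainsIdentities]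
    [WM.ContainsIdentities] [QC.IsLocalization WC] [QM.IsLocalization WM] [QC.Monoidal]
    (hms : MorphismProperty.IsInvertedBy₂ WC WM
      (ms.act ⋙ (Functor.whiskeringRight M M M').obj QM)) :
    ∃ ms' : ModuleStruct C' M', Nonempty (Localization.Lifting₂ QC QM WC WM
      (ms.act ⋙ (Functor.whiskeringRight M M M').obj QM) ms'.act) := by
  let A := Localization.lift₂ _ hms QC QM
  let e := Localization.Lifting₂.iso QC QM WC WM
    (ms.act ⋙ (Functor.whiskeringRight M M M').obj QM) A
  let ms₁ : ModuleStruct C M' := ms.localizeModule QM WM (A := QC ⋙ A) e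
  exact ⟨ms₁.localizeScalars QC WC (A := A) (Iso.refl _), ⟨⟨e⟩⟩⟩

end Localize

end ModuleStruct

namespace TriangulatedModuleStruct

variable {T K : Type*} [Category T] [HasZeroObject T] [Preadditive T] [HasShift T ℤ]
  [∀ n : ℤ, (shiftFunctor T n).Additive] [Pretriangulated T] [MonoidalCategory T]
  [Category K] [HasZeroObject K] [Preadditive K] [HasShift K ℤ]
  [∀ n : ℤ, (shiftFunctor K n).Additive] [Pretriangulated K]

/-- A module category structure whose product is triangulable in each variable, as a triangulated
module category structure, for some choice of commutations with the shifts. -/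
noncomputable def ofIsTriangulable (ms : ModuleStruct T K)
    (hobj : ∀ X, IsTriangulable (ms.act.obj X))
    (hflip : ∀ m, IsTriangulable (ms.act.flip.obj m)) : TriangulatedModuleStruct T K where
  toModuleStruct := ms
  additive_obj X := (hobj X).additive
  commShift_obj X := (hobj X).choose
  triangulated_obj X := (hobj X).choose_spec
  additive_flip m := (hflip m).additive
  commShift_flip m := (hflip m).choose
  triangulated_flip m := (hflip m).choose_spec

variable (tm : TriangulatedModuleStruct T K)

lemma isTriangulable_obj (X : T) : IsTriangulable (tm.act.obj X) :=
  ⟨tm.commShift_obj X, tm.triangulated_obj X⟩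

lemma isTriangulable_flip_obj (m : K) : IsTriangulable (tm.act.flip.obj m) :=
  ⟨tm.commShift_flip m, tm.triangulated_flip m⟩

lemma isInvertedBy₂_trW {K' : Type*} [Category K'] {J : ObjectProperty T} {L : ObjectProperty K}
    (Q : K ⥤ K') [Q.IsLocalization L.trW]
    (hLmod : ∀ (X : T) (m : K), L m → L ((tm.act.obj X).obj m))
    (hJL : ∀ (Z : T) (m : K), J Z → L ((tm.act.obj Z).obj m)) :
    MorphismProperty.IsInvertedBy₂ J.trW L.trW
      (tm.act ⋙ (Functor.whiskeringRight K K K').obj Q) := by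
  rintro ⟨X, m⟩ ⟨Y, n⟩ ⟨f, g⟩ ⟨hf, hg⟩
  have isIso_left : IsIso (Q.map ((tm.act.map f).app m)) :=
    Localization.inverts Q L.trW _
      ((tm.isTriangulable_flip_obj m).trW_map (fun Z ↦ hJL Z m) hf)
  have isIso_right : IsIso (Q.map ((tm.act.obj Y).map g)) :=
    Localization.inverts Q L.trW _ ((tm.isTriangulable_obj Y).trW_map (fun n ↦ hLmod Y n) hg)
  exact IsIso.comp_isIso' isIso_left isIso_right

end TriangulatedModuleStruct

end DerivedModule

theorem verdierQuotient_triangulatedModule_general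
    {T K T' K' : Type*}
    [Category T] [HasZeroObject T] [Preadditive T] [HasShift T ℤ]
    [∀ n : ℤ, (shiftFunctor T n).Additive] [Pretriangulated T] [MonoidalCategory T]
    [Category K] [HasZeroObject K] [Preadditive K] [HasShift K ℤ]
    [∀ n : ℤ, (shiftFunctor K n).Additive] [Pretriangulated K]
    [Category T'] [HasZeroObject T'] [Preadditive T'] [HasShift T' ℤ]
    [∀ n : ℤ, (shiftFunctor T' n).Additive] [Pretriangulated T'] [MonoidalCategory T']
    [Category K'] [HasZeroObject K'] [Preadditive K'] [HasShift K' ℤ]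
    [∀ n : ℤ, (shiftFunctor K' n).Additive] [Pretriangulated K']
    (tm : TriangulatedModuleStruct T K)
    (J : ObjectProperty T) [J.ContainsZero] [J.IsStableUnderShift ℤ]
    (L : ObjectProperty K) [L.ContainsZero] [L.IsStableUnderShift ℤ]
    (hLmod : ∀ (X : T) (m : K), L m → L ((tm.act.obj X).obj m))
    (hJL : ∀ (Z : T) (m : K), J Z → L ((tm.act.obj Z).obj m))
    (QT : T ⥤ T') [QT.IsLocalization J.trW] [QT.CommShift ℤ] [QT.IsTriangulated] [QT.Monoidal]
    (QK : K ⥤ K') [QK.IsLocalization L.trW] [QK.CommShift ℤ] [QK.IsTriangulated] :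
    ∃ tm' : TriangulatedModuleStruct T' K',
      Nonempty ((tm.act ⋙ (Functor.whiskeringRight K K K').obj QK) ≅
        (QT ⋙ tm'.act ⋙ (Functor.whiskeringLeft K K' K').obj QK)) := by
  let F : T ⥤ K ⥤ K' := tm.act ⋙ (Functor.whiskeringRight K K K').obj QK
  obtain ⟨ms, ⟨_⟩⟩ := tm.toModuleStruct.exists_localization QT QK J.trW L.trW
    (tm.isInvertedBy₂_trW QK hLmod hJL)
  have := Localization.essSurj QT J.trW
  have := Localization.essSurj QK L.trW
  have hobj (X : T') : IsTriangulable (ms.act.obj X) :=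
    .obj_of_lifting₂ J.trW QT L QK (G := F)
      (fun X ↦ (tm.isTriangulable_obj X).comp (isTriangulable QK)) _ X
  have hflip (m : K') : IsTriangulable (ms.act.flip.obj m) :=
    .obj_of_lifting₂ L.trW QK J QT (G := F.flip)
      (fun m ↦ (tm.isTriangulable_flip_obj m).comp (isTriangulable QK)) _ m
  exact ⟨.ofIsTriangulable ms hobj hflip,
    ⟨(Localization.Lifting₂.iso QT QK J.trW L.trW F ms.act).symm⟩⟩

/-- The Verdier quotient `K/L` is a left triangulated module category
over the Verdier quotient `T/J`, compatibly with the quotient functors. -/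
theorem verdierQuotient_triangulatedModule
    (T : Type*) [Category T] [HasZeroObject T] [Preadditive T] [HasShift T ℤ]
    [∀ n : ℤ, (shiftFunctor T n).Additive] [Pretriangulated T] [HasBinaryBiproducts T]
    [MonoidalCategory T] [MonoidalTriangulated T]
    (K : Type*) [Category K] [HasZeroObject K] [Preadditive K] [HasShift K ℤ]
    [∀ n : ℤ, (shiftFunctor K n).Additive] [Pretriangulated K] [HasBinaryBiproducts K]
    (tm : TriangulatedModuleStruct T K)
    -- `J` is a two-sided thick ideal of `T`
    (J : T → Prop) (hJthick : IsThickSubcategory J)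
    (hJideal : ∀ (X Z : T), J Z → J (X ⊗ Z) ∧ J (Z ⊗ X))
    -- `L` is a thick `T`-submodule category of `K`
    (L : K → Prop) (hLthick : IsThickSubcategory L)
    (hLmod : ∀ (X : T) (m : K), L m → L ((tm.act.obj X).obj m))
    -- hypothesis: `J ⊗ M ∈ L` for all `J ∈ J`, `M ∈ K`
    (hJL : ∀ (Z : T) (m : K), J Z → L ((tm.act.obj Z).obj m))
    -- the Verdier quotient `T/J`, which is a monoidal triangulated category
    (T' : Type*) [Category T'] [HasZeroObject T'] [Preadditive T'] [HasShift T' ℤ]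
    [∀ n : ℤ, (shiftFunctor T' n).Additive] [Pretriangulated T']
    [MonoidalCategory T'] [MonoidalTriangulated T']
    (QT : T ⥤ T') [QT.IsLocalization (thickW J)]
    [QT.CommShift ℤ] [QT.IsTriangulated] [QT.Monoidal]
    -- the Verdier quotient `K/L`
    (K' : Type*) [Category K'] [HasZeroObject K'] [Preadditive K'] [HasShift K' ℤ]
    [∀ n : ℤ, (shiftFunctor K' n).Additive] [Pretriangulated K']
    (QK : K ⥤ K') [QK.IsLocalization (thickW L)] [QK.CommShift ℤ] [QK.IsTriangulated] :
    ∃ tm' : TriangulatedModuleStruct T' K',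
      Nonempty ((tm.act ⋙ (Functor.whiskeringRight K K K').obj QK) ≅
        (QT ⋙ tm'.act ⋙ (Functor.whiskeringLeft K K' K').obj QK)) := by
  have := hJthick.isTriangulated
  have := hLthick.isTriangulated
  have : QT.IsLocalization (ObjectProperty.trW J) := thickW_eq_trW J ▸ ‹_›
  have : QK.IsLocalization (ObjectProperty.trW L) := thickW_eq_trW L ▸ ‹_›
  exact verdierQuotient_triangulatedModule_general tm J L hLmod hJL QT QK
end

section
/- Let T be a monoidal triangulated category with a compatible bounded t-structure t, and let K be a left triangulated module category over T with a bounded t-structure t′. Then the following are equivalent: (1) the module product bifunctor is compatible with t and t′, i.e. H_t ⊗ H_{t′} ⊆ H_{t′}, where H_t and H_{t′} are the hearts; (2) for all X ∈ T, M ∈ K and all integers n, m, one has τ′_{≥ n+m+1}(τ_{≤ n} X ⊗ τ′_{≤ m} M) = 0 and τ′_{≤ n+m−1}(τ_{≥ n} X ⊗ τ′_{≥ m} M) = 0, where τ, τ′ denote the truncation functors of t and t′. -/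
/-!
STATEMENT 9: Let `T` be a monoidal triangulated category with a compatible bounded
t-structure `t`, and `K` a left triangulated module category over `T` with a bounded
t-structure `t'`. Then: the module product bifunctor is compatible with `t` and `t'`
(i.e. `H_t ⊗ H_{t'} ⊆ H_{t'}`) if and only if for all `X ∈ T`, `M ∈ K` and integers
`n`, `m` one has `τ'_{≥ n+m+1}(τ_{≤ n} X ⊗ τ'_{≤ m} M) = 0` and
`τ'_{≤ n+m-1}(τ_{≥ n} X ⊗ τ'_{≥ m} M) = 0`.

Truncations are encoded by a choice of truncation triangle (`truncLEObj`,
`truncGEObj`); since truncations are unique up to isomorphism and `IsZero` is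
invariant under isomorphisms, this is faithful.
-/

open CategoryTheory Category Limits Pretriangulated MonoidalCategory ZeroObject
open CategoryTheory.Triangulated

namespace DerivedModule

section TStructureExtras

variable {K : Type*} [Category K] [HasZeroObject K] [Preadditive K] [HasShift K ℤ]
  [∀ n : ℤ, (shiftFunctor K n).Additive] [Pretriangulated K]

/-- A t-structure is bounded if every object is bounded above and below. -/
def tBounded (t : TStructure K) : Prop :=
  (∀ X : K, ∃ n : ℤ, t.le n X) ∧ (∀ X : K, ∃ n : ℤ, t.ge n X)

/-- The heart of a t-structure, as a predicate on objects. -/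
def heartP (t : TStructure K) (X : K) : Prop := t.le 0 X ∧ t.ge 0 X

/-- A choice of truncation `τ_{≤ n} A` for a t-structure. -/
noncomputable def truncLEObj (t : TStructure K) (n : ℤ) (A : K) : K :=
  (t.exists_triangle A n (n + 1) rfl).choose

/-- A choice of truncation `τ_{≥ n} A` for a t-structure. -/
noncomputable def truncGEObj (t : TStructure K) (n : ℤ) (A : K) : K :=
  (t.exists_triangle A (n - 1) n (by omega)).choose_spec.choose

/-- The cohomology object `H^n_t(A) = (τ_{≤ n} τ_{≥ n} A)⟦n⟧` of a t-structure. -/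
noncomputable def homologyObj (t : TStructure K) (n : ℤ) (A : K) : K :=
  (truncLEObj t n (truncGEObj t n A))⟦n⟧

end TStructureExtras

section Dev

variable {T : Type*} [Category T] [HasZeroObject T] [Preadditive T] [HasShift T ℤ]
  [∀ n : ℤ, (shiftFunctor T n).Additive] [Pretriangulated T] [MonoidalCategory T]

/-- The deviation of a t-structure on a monoidal triangulated category: the set of
integers `n` such that `T^{≤0} ⊗ T^{≤n} ⊆ T^{≤0}` and `T^{≥0} ⊗ T^{≥n} ⊆ T^{≥0}`. -/
def monDev (t : TStructure T) : Set ℤ :=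
  {n | (∀ X Y : T, t.le 0 X → t.le n Y → t.le 0 (X ⊗ Y)) ∧
       (∀ X Y : T, t.ge 0 X → t.ge n Y → t.ge 0 (X ⊗ Y))}

/-- A monoidal t-structure: a bounded t-structure with nonempty deviation. -/
def IsMonoidalTStructure (t : TStructure T) : Prop :=
  tBounded t ∧ (monDev t).Nonempty

variable {K : Type*} [Category K] [HasZeroObject K] [Preadditive K] [HasShift K ℤ]
  [∀ n : ℤ, (shiftFunctor K n).Additive] [Pretriangulated K]

/-- The deviation `dev_t(t')` of a t-structure `t'` on a triangulated module category
(with module product bifunctor `act`) with respect to a t-structure `t` on the acting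
monoidal triangulated category: the set of integers `m` with
`T^{≤0} ⊗ K^{≤m} ⊆ K^{≤0}` and `T^{≥0} ⊗ K^{≥m} ⊆ K^{≥0}`. -/
def modDev (act : T ⥤ K ⥤ K) (t : TStructure T) (t' : TStructure K) : Set ℤ :=
  {m | (∀ (X : T) (M : K), t.le 0 X → t'.le m M → t'.le 0 ((act.obj X).obj M)) ∧
       (∀ (X : T) (M : K), t.ge 0 X → t'.ge m M → t'.ge 0 ((act.obj X).obj M))}

/-- A triangulated module t-structure with respect to `t`: a bounded t-structure
with nonempty deviation with respect to `t`. -/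
def IsModuleTStructure (act : T ⥤ K ⥤ K) (t : TStructure T) (t' : TStructure K) : Prop :=
  tBounded t' ∧ (modDev act t t').Nonempty

end Dev

end DerivedModule

open DerivedModule

/-!
A functor in one variable that commutes with shifts and sends the heart into `D^{≤ m}` sends every
pure object of degree `k` into `D^{≤ k + m}`, so by dévissage along truncation triangles it sends
every bounded below object of `C^{≤ n}` into `D^{≤ n + m}`. For a compatible bifunctor `F`, apply
this first to `F(X, -)` with `X` in the heart, then to `F(-, M)` with `M` arbitrary in `K^{≤ m}`.
-/

namespace DerivedModule

section TStructure

variable {C : Type*} [Category C] [HasZeroObject C] [Preadditive C] [HasShift C ℤ]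
  [∀ n : ℤ, (shiftFunctor C n).Additive] [Pretriangulated C] (t : TStructure C)

lemma tBounded.plus {t : TStructure C} (ht : tBounded t) (X : C) : t.plus X :=
  (ht.2 X).imp fun _ h ↦ ⟨h⟩

lemma tBounded.minus {t : TStructure C} (ht : tBounded t) (X : C) : t.minus X :=
  (ht.1 X).imp fun _ h ↦ ⟨h⟩

lemma isLE_obj₃_of_distTriang {Tr : Triangle C} (hTr : Tr ∈ distTriang C) (n : ℤ)
    [t.IsLE Tr.obj₁ n] [t.IsLE Tr.obj₂ n] : t.IsLE Tr.obj₃ n := by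
  have := t.isLE_shift Tr.obj₁ n 1 (n - 1)
  exact t.isLE₂ _ (rot_of_distTriang _ hTr) n ‹_› (t.isLE_of_le (Tr.obj₁⟦(1 : ℤ)⟧) (n - 1) n)

lemma isGE_obj₁_of_distTriang {Tr : Triangle C} (hTr : Tr ∈ distTriang C) (n : ℤ)
    [t.IsGE Tr.obj₂ n] [t.IsGE Tr.obj₃ n] : t.IsGE Tr.obj₁ n := by
  have := t.isGE_shift Tr.obj₃ n (-1) (n + 1)
  exact t.isGE₂ _ (inv_rot_of_distTriang _ hTr) n
    (t.isGE_of_ge (Tr.obj₃⟦(-1 : ℤ)⟧) n (n + 1)) ‹_›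

instance isTriangulatedClosed₂_le (n : ℤ) : (t.le n).IsTriangulatedClosed₂ :=
  .mk' fun Tr hTr h₁ h₃ ↦ (t.isLE₂ Tr hTr n ⟨h₁⟩ ⟨h₃⟩).le

instance isTriangulatedClosed₂_ge (n : ℤ) : (t.ge n).IsTriangulatedClosed₂ :=
  .mk' fun Tr hTr h₁ h₃ ↦ (t.isGE₂ Tr hTr n ⟨h₁⟩ ⟨h₃⟩).ge

lemma heartP_shift (X : C) (n : ℤ) [t.IsLE X n] [t.IsGE X n] : heartP t (X⟦n⟧) :=
  ⟨(t.isLE_shift X n n 0).le, (t.isGE_shift X n n 0).ge⟩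

lemma prop_of_isGE_of_isLE (P : ObjectProperty C) [P.IsClosedUnderIsomorphisms]
    [P.IsTriangulatedClosed₂] {a b : ℤ} (hab : a ≤ b)
    (hP : ∀ (k : ℤ) (X : C), a ≤ k → k ≤ b → t.IsLE X k → t.IsGE X k → P X)
    (X : C) [t.IsGE X a] [t.IsLE X b] : P X := by
  induction b, hab using Int.leInduction generalizing X with
  | base => exact hP a X le_rfl le_rfl ‹_› ‹_›
  | succ b hab ih =>
    let Tr := (t.triangleLEGT b).obj X
    have hTr : Tr ∈ distTriang C := t.triangleLEGT_distinguished b X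
    have hLE : t.IsLE Tr.obj₁ b := inferInstanceAs (t.IsLE ((t.truncLE b).obj X) b)
    have hGE : t.IsGE Tr.obj₃ (b + 1) := inferInstanceAs (t.IsGE ((t.truncGT b).obj X) (b + 1))
    have : t.IsGE Tr.obj₂ a := ‹t.IsGE X a›
    have : t.IsLE Tr.obj₂ (b + 1) := ‹t.IsLE X (b + 1)›
    have : t.IsGE Tr.obj₃ a := t.isGE_of_ge Tr.obj₃ a (b + 1)
    have : t.IsLE Tr.obj₁ (b + 1) := t.isLE_of_le Tr.obj₁ b (b + 1)
    have : t.IsGE Tr.obj₁ a := isGE_obj₁_of_distTriang t hTr a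
    have : t.IsLE Tr.obj₃ (b + 1) := isLE_obj₃_of_distTriang t hTr (b + 1)
    exact P.ext_of_isTriangulatedClosed₂ Tr hTr
      (ih (fun k Y hak hkb ↦ hP k Y hak (by lia)) Tr.obj₁)
      (hP (b + 1) Tr.obj₃ (by lia) le_rfl this hGE)

end TStructure

section Truncation

variable {C : Type*} [Category C] [HasZeroObject C] [Preadditive C] [HasShift C ℤ]
  [∀ n : ℤ, (shiftFunctor C n).Additive] [Pretriangulated C] (t : TStructure C)

lemma nonempty_truncLEObj_iso (n : ℤ) (A : C) :
    Nonempty (truncLEObj t n A ≅ (t.truncLE n).obj A) := by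
  obtain ⟨_, hLE, hGE, _, _, _, hTr⟩ := (t.exists_triangle A n (n + 1) rfl).choose_spec
  obtain ⟨e, -⟩ := t.triangle_iso_exists hTr (t.triangleLEGT_distinguished n A) (Iso.refl A)
    n (n + 1) ⟨hLE⟩ ⟨hGE⟩ (inferInstanceAs (t.IsLE ((t.truncLE n).obj A) n))
    (inferInstanceAs (t.IsGE ((t.truncGT n).obj A) (n + 1)))
  exact ⟨Triangle.π₁.mapIso e⟩

lemma nonempty_truncGEObj_iso (n : ℤ) (A : C) :
    Nonempty (truncGEObj t n A ≅ (t.truncGE n).obj A) := by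
  obtain ⟨hLE, hGE, _, _, _, hTr⟩ :=
    (t.exists_triangle A (n - 1) n (by lia)).choose_spec.choose_spec
  obtain ⟨e, -⟩ := t.triangle_iso_exists hTr (t.triangleLTGE_distinguished n A) (Iso.refl A)
    (n - 1) n ⟨hLE⟩ ⟨hGE⟩ inferInstance inferInstance
  exact ⟨Triangle.π₃.mapIso e⟩

instance isLE_truncLEObj (n : ℤ) (A : C) : t.IsLE (truncLEObj t n A) n :=
  let ⟨e⟩ := nonempty_truncLEObj_iso t n A
  t.isLE_of_iso e.symm n

instance isGE_truncGEObj (n : ℤ) (A : C) : t.IsGE (truncGEObj t n A) n :=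
  let ⟨e⟩ := nonempty_truncGEObj_iso t n A
  t.isGE_of_iso e.symm n

lemma nonempty_truncLEObj_iso_self (n : ℤ) (A : C) [t.IsLE A n] :
    Nonempty (truncLEObj t n A ≅ A) :=
  (nonempty_truncLEObj_iso t n A).map (· ≪≫ asIso ((t.truncLEι n).app A))

lemma nonempty_truncGEObj_iso_self (n : ℤ) (A : C) [t.IsGE A n] :
    Nonempty (truncGEObj t n A ≅ A) :=
  (nonempty_truncGEObj_iso t n A).map (· ≪≫ (asIso ((t.truncGEπ n).app A)).symm)

lemma isZero_truncLEObj_iff {n₀ n₁ : ℤ} (h : n₀ + 1 = n₁) (A : C) :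
    IsZero (truncLEObj t n₀ A) ↔ t.IsGE A n₁ := by
  obtain ⟨e⟩ := nonempty_truncLEObj_iso t n₀ A
  rw [t.isGE_iff_isZero_truncLE_obj n₀ n₁ h, e.isZero_iff]

lemma isZero_truncGEObj_iff {n₀ n₁ : ℤ} (h : n₀ + 1 = n₁) (A : C) :
    IsZero (truncGEObj t n₁ A) ↔ t.IsLE A n₀ := by
  obtain ⟨e⟩ := nonempty_truncGEObj_iso t n₁ A
  rw [t.isLE_iff_isZero_truncGE_obj n₀ n₁ h, e.isZero_iff]

end Truncation

section TriangulatedFunctor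

variable {C : Type*} [Category C] [HasZeroObject C] [Preadditive C] [HasShift C ℤ]
  [∀ n : ℤ, (shiftFunctor C n).Additive] [Pretriangulated C]
  {D : Type*} [Category D] [HasZeroObject D] [Preadditive D] [HasShift D ℤ]
  [∀ n : ℤ, (shiftFunctor D n).Additive] [Pretriangulated D]
  (F : C ⥤ D) [F.CommShift ℤ] [F.IsTriangulated]

instance isTriangulatedClosed₂_inverseImage (P : ObjectProperty D) [P.IsClosedUnderIsomorphisms]
    [P.IsTriangulatedClosed₂] : (P.inverseImage F).IsTriangulatedClosed₂ :=
  .mk' fun Tr hTr h₁ h₃ ↦ P.ext_of_isTriangulatedClosed₂ _ (F.map_distinguished Tr hTr) h₁ h₃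

variable (t : TStructure C) (s : TStructure D)

lemma isLE_obj_of_forall_heartP {m : ℤ} (hF : ∀ X : C, heartP t X → s.IsLE (F.obj X) m)
    {n : ℤ} {X : C} (hX : t.IsLE X n) (hX_plus : t.plus X) : s.IsLE (F.obj X) (n + m) := by
  obtain ⟨a, han, ha⟩ : ∃ a ≤ n, t.IsGE X a :=
    let ⟨b, hb⟩ := hX_plus
    ⟨min b n, min_le_right b n, t.isGE_of_ge X _ b (min_le_left b n)⟩
  have pure_mem (k : ℤ) (Y : C) (_ : a ≤ k) (_ : k ≤ n) (_ : t.IsLE Y k) (_ : t.IsGE Y k) :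
      (s.le (n + m)).inverseImage F Y := by
    have : s.IsLE ((shiftFunctor C k ⋙ F).obj Y) m := hF _ (heartP_shift t Y k)
    have : s.IsLE ((F.obj Y)⟦k⟧) m := s.isLE_of_iso ((F.commShiftIso k).app Y) m
    have := s.isLE_of_shift (F.obj Y) (k + m) k m
    exact (s.isLE_of_le (F.obj Y) (k + m) (n + m)).le
  exact ⟨prop_of_isGE_of_isLE t _ han pure_mem X⟩

lemma isGE_obj_of_forall_heartP {m : ℤ} (hF : ∀ X : C, heartP t X → s.IsGE (F.obj X) m)
    {n : ℤ} {X : C} (hX : t.IsGE X n) (hX_minus : t.minus X) : s.IsGE (F.obj X) (n + m) := by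
  obtain ⟨b, hnb, hb⟩ : ∃ b, n ≤ b ∧ t.IsLE X b :=
    let ⟨a, ha⟩ := hX_minus
    ⟨max a n, le_max_right a n, t.isLE_of_le X a _ (le_max_left a n)⟩
  have pure_mem (k : ℤ) (Y : C) (_ : n ≤ k) (_ : k ≤ b) (_ : t.IsLE Y k) (_ : t.IsGE Y k) :
      (s.ge (n + m)).inverseImage F Y := by
    have : s.IsGE ((shiftFunctor C k ⋙ F).obj Y) m := hF _ (heartP_shift t Y k)
    have : s.IsGE ((F.obj Y)⟦k⟧) m := s.isGE_of_iso ((F.commShiftIso k).app Y) m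
    have := s.isGE_of_shift (F.obj Y) (k + m) k m
    exact (s.isGE_of_ge (F.obj Y) (n + m) (k + m)).ge
  exact ⟨prop_of_isGE_of_isLE t _ hnb pure_mem X⟩

end TriangulatedFunctor

section Bifunctor

variable {T : Type*} [Category T] [HasZeroObject T] [Preadditive T] [HasShift T ℤ]
  [∀ n : ℤ, (shiftFunctor T n).Additive] [Pretriangulated T]
  {K : Type*} [Category K] [HasZeroObject K] [Preadditive K] [HasShift K ℤ]
  [∀ n : ℤ, (shiftFunctor K n).Additive] [Pretriangulated K]
  {L : Type*} [Category L] [HasZeroObject L] [Preadditive L] [HasShift L ℤ]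
  [∀ n : ℤ, (shiftFunctor L n).Additive] [Pretriangulated L]
  (F : T ⥤ K ⥤ L) (t : TStructure T) (t' : TStructure K) (s : TStructure L)

lemma forall_isZero_truncGEObj_iff (n m : ℤ) :
    (∀ (X : T) (M : K), IsZero (truncGEObj s (n + m + 1)
      ((F.obj (truncLEObj t n X)).obj (truncLEObj t' m M)))) ↔
      ∀ (X : T) (M : K), t.IsLE X n → t'.IsLE M m → s.IsLE ((F.obj X).obj M) (n + m) := by
  simp only [isZero_truncGEObj_iff s (rfl : n + m + 1 = _)]
  refine ⟨fun h X M _ _ ↦ ?_, fun h X M ↦ h _ _ inferInstance inferInstance⟩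
  obtain ⟨e⟩ := nonempty_truncLEObj_iso_self t n X
  obtain ⟨e'⟩ := nonempty_truncLEObj_iso_self t' m M
  have := h X M
  exact s.isLE_of_iso ((F.mapIso e).app _ ≪≫ (F.obj X).mapIso e') _

lemma forall_isZero_truncLEObj_iff (n m : ℤ) :
    (∀ (X : T) (M : K), IsZero (truncLEObj s (n + m - 1)
      ((F.obj (truncGEObj t n X)).obj (truncGEObj t' m M)))) ↔
      ∀ (X : T) (M : K), t.IsGE X n → t'.IsGE M m → s.IsGE ((F.obj X).obj M) (n + m) := by
  simp only [isZero_truncLEObj_iff s (sub_add_cancel (n + m) 1)]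
  refine ⟨fun h X M _ _ ↦ ?_, fun h X M ↦ h _ _ inferInstance inferInstance⟩
  obtain ⟨e⟩ := nonempty_truncGEObj_iso_self t n X
  obtain ⟨e'⟩ := nonempty_truncGEObj_iso_self t' m M
  have := h X M
  exact s.isGE_of_iso ((F.mapIso e).app _ ≪≫ (F.obj X).mapIso e') _

variable [∀ X, (F.obj X).CommShift ℤ] [∀ X, (F.obj X).IsTriangulated]
  [∀ M, (F.flip.obj M).CommShift ℤ] [∀ M, (F.flip.obj M).IsTriangulated]

lemma isLE_obj_obj_of_forall_heartP
    (hF : ∀ (X : T) (M : K), heartP t X → heartP t' M → s.IsLE ((F.obj X).obj M) 0)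
    {n m : ℤ} {X : T} {M : K} (hX : t.IsLE X n) (hX_plus : t.plus X)
    (hM : t'.IsLE M m) (hM_plus : t'.plus M) : s.IsLE ((F.obj X).obj M) (n + m) := by
  refine isLE_obj_of_forall_heartP (F.flip.obj M) t s (fun Y hY ↦ ?_) hX hX_plus
  simpa only [add_zero, Functor.flip_obj_obj] using
    isLE_obj_of_forall_heartP (F.obj Y) t' s (fun N ↦ hF Y N hY) hM hM_plus

lemma isGE_obj_obj_of_forall_heartP
    (hF : ∀ (X : T) (M : K), heartP t X → heartP t' M → s.IsGE ((F.obj X).obj M) 0)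
    {n m : ℤ} {X : T} {M : K} (hX : t.IsGE X n) (hX_minus : t.minus X)
    (hM : t'.IsGE M m) (hM_minus : t'.minus M) : s.IsGE ((F.obj X).obj M) (n + m) := by
  refine isGE_obj_of_forall_heartP (F.flip.obj M) t s (fun Y hY ↦ ?_) hX hX_minus
  simpa only [add_zero, Functor.flip_obj_obj] using
    isGE_obj_of_forall_heartP (F.obj Y) t' s (fun N ↦ hF Y N hY) hM hM_minus

theorem moduleProduct_compatible_iff_truncation_vanishing_general
    (htb : tBounded t) (ht'b : tBounded t') :
    (∀ (X : T) (M : K), heartP t X → heartP t' M → heartP s ((F.obj X).obj M)) ↔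
      ∀ (X : T) (M : K) (n m : ℤ),
        IsZero (truncGEObj s (n + m + 1)
          ((F.obj (truncLEObj t n X)).obj (truncLEObj t' m M))) ∧
        IsZero (truncLEObj s (n + m - 1)
          ((F.obj (truncGEObj t n X)).obj (truncGEObj t' m M))) := by
  constructor
  · intro hF X M n m
    have isLE_act (Y : T) (N : K) (hY : t.IsLE Y n) (hN : t'.IsLE N m) :=
      isLE_obj_obj_of_forall_heartP F t t' s (fun X M hX hM ↦ ⟨(hF X M hX hM).1⟩)
        hY (htb.plus Y) hN (ht'b.plus N)
    have isGE_act (Y : T) (N : K) (hY : t.IsGE Y n) (hN : t'.IsGE N m) :=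
      isGE_obj_obj_of_forall_heartP F t t' s (fun X M hX hM ↦ ⟨(hF X M hX hM).2⟩)
        hY (htb.minus Y) hN (ht'b.minus N)
    exact ⟨(forall_isZero_truncGEObj_iff F t t' s n m).2 isLE_act X M,
      (forall_isZero_truncLEObj_iff F t t' s n m).2 isGE_act X M⟩
  · intro h X M hX hM
    have isLE_act := (forall_isZero_truncGEObj_iff F t t' s 0 0).1 fun Y N ↦ (h Y N 0 0).1
    have isGE_act := (forall_isZero_truncLEObj_iff F t t' s 0 0).1 fun Y N ↦ (h Y N 0 0).2
    exact ⟨(isLE_act X M ⟨hX.1⟩ ⟨hM.1⟩).le, (isGE_act X M ⟨hX.2⟩ ⟨hM.2⟩).ge⟩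

end Bifunctor

end DerivedModule

/-- Compatibility of the module product with the t-structures is
equivalent to the vanishing of the mixed truncations. -/
theorem moduleProduct_compatible_iff_truncation_vanishing
    (T : Type*) [Category T] [HasZeroObject T] [Preadditive T] [HasShift T ℤ]
    [∀ n : ℤ, (shiftFunctor T n).Additive] [Pretriangulated T]
    [MonoidalCategory T] [MonoidalTriangulated T]
    (K : Type*) [Category K] [HasZeroObject K] [Preadditive K] [HasShift K ℤ]
    [∀ n : ℤ, (shiftFunctor K n).Additive] [Pretriangulated K]
    (tm : TriangulatedModuleStruct T K)
    (t : TStructure T) (t' : TStructure K)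
    -- `t` is a bounded t-structure compatible with the tensor product of `T`
    (htb : tBounded t)
    (htcomp : ∀ X Y : T, heartP t X → heartP t Y → heartP t (X ⊗ Y))
    -- `t'` is a bounded t-structure on `K`
    (ht'b : tBounded t') :
    (∀ (X : T) (M : K), heartP t X → heartP t' M →
        heartP t' ((tm.act.obj X).obj M)) ↔
      (∀ (X : T) (M : K) (n m : ℤ),
        Limits.IsZero (truncGEObj t' (n + m + 1)
          ((tm.act.obj (truncLEObj t n X)).obj (truncLEObj t' m M))) ∧
        Limits.IsZero (truncLEObj t' (n + m - 1)
          ((tm.act.obj (truncGEObj t n X)).obj (truncGEObj t' m M)))) := by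
  let := tm.commShift_obj
  have (X : T) : (tm.act.obj X).IsTriangulated := tm.triangulated_obj X
  let := tm.commShift_flip
  have (M : K) : (tm.act.flip.obj M).IsTriangulated := tm.triangulated_flip M
  exact moduleProduct_compatible_iff_truncation_vanishing_general tm.act t t' t' htb ht'b
end

section
/- Let T be a monoidal triangulated category equipped with a monoidal t-structure t with 0 ∈ dev(t), and let K be a left triangulated module category over T with a triangulated module t-structure t′ with respect to t such that 0 ∈ dev_t(t′). Then K is faithful as a T-module category (every nonzero object of T acts by a nonzero functor on K) if and only if the heart H_{t′} is faithful as a module category over the heart H_t. -/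
/-!
STATEMENT 15: Let `T` be a monoidal triangulated category with a monoidal t-structure
`t` with `0 ∈ dev(t)`, and `K` a left triangulated module category over `T` with a
triangulated module t-structure `t'` with respect to `t` such that `0 ∈ dev_t(t')`.
Then `K` is faithful as a `T`-module category (every nonzero object of `T` acts by a
nonzero functor on `K`) if and only if the heart `H_{t'}` is faithful as a module
category over the heart `H_t`.
-/

open CategoryTheory Category Limits Pretriangulated MonoidalCategory ZeroObject
open CategoryTheory.Triangulated

open DerivedModule

/-!
The objects killed by a triangulated functor form a triangulated subcategory, and an object of a
bounded t-structure is an iterated extension of shifts of heart objects. So if an object of the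
acting category kills the heart, it kills everything.

Conversely, let `X ≠ 0` have top degree `n`, so that `(τ≥n X)⟦n⟧` is a nonzero object of the heart.
Acting on a fixed object of the heart is a t-exact functor `G`. If `G X = 0`, then in the triangle
`G (τ<n X) ⟶ 0 ⟶ G (τ≥n X) ⟶` the third term lies in degrees `≥ n`, but it is also the
shift by one of the first term and so lies in degrees `< n - 1`; hence it vanishes.
-/

namespace DerivedModule

section

variable {C : Type*} [Category C] [HasZeroObject C] [Preadditive C] [HasShift C ℤ]
  [∀ n : ℤ, (shiftFunctor C n).Additive] [Pretriangulated C]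
  {D : Type*} [Category D] [HasZeroObject D] [Preadditive D] [HasShift D ℤ]
  [∀ n : ℤ, (shiftFunctor D n).Additive] [Pretriangulated D]

section Truncation

variable (t : TStructure C)

variable {t} in
lemma tBounded.bounded (ht : tBounded t) (X : C) : t.bounded X :=
  ⟨(ht.2 X).imp fun _ h ↦ ⟨h⟩, (ht.1 X).imp fun _ h ↦ ⟨h⟩⟩

lemma heart_shift (X : C) (n : ℤ) [t.IsLE X n] [t.IsGE X n] : t.heart (X⟦n⟧) :=
  (t.mem_heart_iff _).2 ⟨t.isLE_shift X n n 0, t.isGE_shift X n n 0⟩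

lemma isLE₃_of_isLE₁₂ (Δ : Triangle C) (hΔ : Δ ∈ distTriang C) (n : ℤ)
    (h₁ : t.IsLE Δ.obj₁ (n + 1)) (h₂ : t.IsLE Δ.obj₂ n) : t.IsLE Δ.obj₃ n :=
  t.isLE₂ _ (rot_of_distTriang _ hΔ) n h₂ (t.isLE_shift Δ.obj₁ (n + 1) 1 n)

lemma isGE₁_of_isGE₂₃ (Δ : Triangle C) (hΔ : Δ ∈ distTriang C) (n : ℤ)
    (h₂ : t.IsGE Δ.obj₂ n) (h₃ : t.IsGE Δ.obj₃ (n - 1)) : t.IsGE Δ.obj₁ n :=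
  t.isGE₂ _ (inv_rot_of_distTriang _ hΔ) n (t.isGE_shift Δ.obj₃ (n - 1) (-1) n) h₂

-- Mathlib has the next two lemmas as instances in triangulated categories, via the octahedral
-- axiom; when the two bounds involved are this close, rotating the truncation triangle is enough.
lemma isLE_truncGE_obj (X : C) (n : ℤ) [hX : t.IsLE X n] : t.IsLE ((t.truncGE n).obj X) n :=
  isLE₃_of_isLE₁₂ t _ (t.triangleLTGE_distinguished n X) n (t.isLE_truncLT_obj X n (n + 1)) hX

lemma isGE_truncLT_obj (X : C) {a n : ℤ} (han : a ≤ n + 1) [hX : t.IsGE X a] :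
    t.IsGE ((t.truncLT n).obj X) a :=
  isGE₁_of_isGE₂₃ t _ (t.triangleLTGE_distinguished n X) a hX (t.isGE_truncGE_obj X n (a - 1))

lemma exists_isLE_not_isLE_sub_one {X : C} (hX : t.bounded X) (hX₀ : ¬ IsZero X) :
    ∃ n : ℤ, t.IsLE X n ∧ ¬ t.IsLE X (n - 1) := by
  obtain ⟨⟨a, _⟩, hX_le⟩ := hX
  have le_of_isLE (n : ℤ) (_ : t.IsLE X n) : a ≤ n :=
    not_lt.1 fun hna ↦ hX₀ (t.isZero X n a hna)
  obtain ⟨n, hn, n_le⟩ := Int.exists_least_of_bdd ⟨a, le_of_isLE⟩ hX_le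
  exact ⟨n, hn, fun hn' ↦ by linarith [n_le _ hn']⟩

lemma exists_heart_truncGE_shift_not_isZero {X : C} (hX : t.bounded X) (hX₀ : ¬ IsZero X) :
    ∃ n : ℤ, t.heart (((t.truncGE n).obj X)⟦n⟧) ∧ ¬ IsZero (((t.truncGE n).obj X)⟦n⟧) := by
  obtain ⟨n, _, hn⟩ := exists_isLE_not_isLE_sub_one t hX hX₀
  have := isLE_truncGE_obj t X n
  refine ⟨n, heart_shift t _ n, fun hZ ↦ hn ?_⟩
  exact (t.isLE_iff_isZero_truncGE_obj (n - 1) n (by lia) X).2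
    (.of_full_of_faithful_of_isZero (shiftFunctor C n) _ hZ)

end Truncation

section Devissage

variable {t : TStructure C} {P : ObjectProperty C} [P.IsStableUnderShift ℤ]
  [P.IsClosedUnderIsomorphisms]

lemma prop_of_isLE_of_isGE_self (hP : t.heart ≤ P) (X : C) (n : ℤ) [t.IsLE X n] [t.IsGE X n] :
    P X :=
  (P.prop_shift_iff_of_isStableUnderShift X n).1 (hP _ (heart_shift t X n))

variable [P.IsTriangulatedClosed₂]

lemma prop_of_isLE_of_isGE (hP : t.heart ≤ P) {a b : ℤ} (hab : a ≤ b) :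
    ∀ (X : C) [t.IsLE X b] [t.IsGE X a], P X := by
  induction b, hab using Int.leInduction with
  | base => exact fun X _ _ ↦ prop_of_isLE_of_isGE_self hP X a
  | succ b hab ih =>
    intro X _ _
    have := isGE_truncLT_obj t X (show a ≤ b + 1 + 1 by lia)
    have := isLE_truncGE_obj t X (b + 1)
    exact P.ext_of_isTriangulatedClosed₂ _ (t.triangleLTGE_distinguished (b + 1) X)
      (ih ((t.truncLT (b + 1)).obj X))
      (prop_of_isLE_of_isGE_self hP ((t.truncGE (b + 1)).obj X) (b + 1))

theorem bounded_le_of_heart_le (hP : t.heart ≤ P) : t.bounded ≤ P := by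
  rintro X ⟨⟨a, _⟩, ⟨b, _⟩⟩
  have := t.isLE_of_le X b (max a b)
  exact prop_of_isLE_of_isGE hP (le_max_left a b) X

end Devissage

instance kernel_isTriangulated (F : C ⥤ D) [F.CommShift ℤ] [F.IsTriangulated] :
    F.kernel.IsTriangulated where
  exists_zero := ⟨0, isZero_zero C, F.map_isZero (isZero_zero C)⟩
  isStableUnderShiftBy n := ⟨fun X hX ↦
    ((shiftFunctor D n).map_isZero hX).of_iso ((F.commShiftIso n).app X)⟩
  toIsTriangulatedClosed₂ := .mk' fun Δ hΔ h₁ h₃ ↦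
    Triangle.isZero₂_of_isZero₁₃ _ (F.map_distinguished Δ hΔ) h₁ h₃

/-- A functor between pretriangulated categories with t-structures is t-exact if it preserves
the aisle `≤ 0` and the coaisle `≥ 0`. -/
structure IsTExact (F : C ⥤ D) (t : TStructure C) (t' : TStructure D) : Prop where
  le_zero : ∀ X : C, t.le 0 X → t'.le 0 (F.obj X)
  ge_zero : ∀ X : C, t.ge 0 X → t'.ge 0 (F.obj X)

namespace IsTExact

variable {F : C ⥤ D} [F.CommShift ℤ] {t : TStructure C} {t' : TStructure D}

lemma isLE_obj (hF : IsTExact F t t') (X : C) (n : ℤ) [t.IsLE X n] : t'.IsLE (F.obj X) n := by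
  have : t'.IsLE ((F.obj X)⟦n⟧) 0 :=
    ⟨(t'.le 0).prop_of_iso ((F.commShiftIso n).app X) (hF.le_zero _ (t.isLE_shift X n n 0).le)⟩
  exact t'.isLE_of_shift (F.obj X) n n 0

lemma isGE_obj (hF : IsTExact F t t') (X : C) (n : ℤ) [t.IsGE X n] : t'.IsGE (F.obj X) n := by
  have : t'.IsGE ((F.obj X)⟦n⟧) 0 :=
    ⟨(t'.ge 0).prop_of_iso ((F.commShiftIso n).app X) (hF.ge_zero _ (t.isGE_shift X n n 0).ge)⟩
  exact t'.isGE_of_shift (F.obj X) n n 0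

lemma kernel_truncGE_obj [F.IsTriangulated] (hF : IsTExact F t t') {X : C} (hX : F.kernel X)
    (n : ℤ) : F.kernel ((t.truncGE n).obj X) := by
  have : t.IsLE ((t.truncLT n).obj X) (n - 1 + 1) := t.isLE_truncLT_obj X n (n - 1 + 1)
  have : t'.IsLE (F.obj ((t.truncGE n).obj X)) (n - 1) :=
    isLE₃_of_isLE₁₂ t' _ (F.map_distinguished _ (t.triangleLTGE_distinguished n X)) (n - 1)
      (hF.isLE_obj ((t.truncLT n).obj X) (n - 1 + 1)) (t'.isLE_of_isZero hX (n - 1))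
  have := hF.isGE_obj ((t.truncGE n).obj X) n
  exact t'.isZero _ (n - 1) n

end IsTExact

end

end DerivedModule

theorem faithful_iff_heart_faithful_general
    {C : Type*} [Category C] [HasZeroObject C] [Preadditive C] [HasShift C ℤ]
    [∀ n : ℤ, (shiftFunctor C n).Additive] [Pretriangulated C]
    {D : Type*} [Category D] [HasZeroObject D] [Preadditive D] [HasShift D ℤ]
    [∀ n : ℤ, (shiftFunctor D n).Additive] [Pretriangulated D]
    {E : Type*} [Category E] [HasZeroObject E] [Preadditive E] [HasShift E ℤ]
    [∀ n : ℤ, (shiftFunctor E n).Additive] [Pretriangulated E]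
    (F : C ⥤ D ⥤ E)
    [∀ X : C, (F.obj X).CommShift ℤ] [∀ X : C, (F.obj X).IsTriangulated]
    [∀ Y : D, (F.flip.obj Y).CommShift ℤ] [∀ Y : D, (F.flip.obj Y).IsTriangulated]
    {tC : TStructure C} {tD : TStructure D} {tE : TStructure E}
    (hC : tBounded tC) (hD : tBounded tD)
    (hF : ∀ Y : D, tD.heart Y → IsTExact (F.flip.obj Y) tC tE) :
    (∀ X : C, ¬ IsZero X → ∃ Y : D, ¬ IsZero ((F.obj X).obj Y)) ↔
      (∀ X : C, tC.heart X → ¬ IsZero X →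
        ∃ Y : D, tD.heart Y ∧ ¬ IsZero ((F.obj X).obj Y)) := by
  refine ⟨fun h X _ hX₀ ↦ ?_, fun h X hX₀ ↦ ?_⟩
  · obtain ⟨Y, hY⟩ := h X hX₀
    by_contra! heart_le_kernel
    exact hY (bounded_le_of_heart_le (P := (F.obj X).kernel) heart_le_kernel Y (hD.bounded Y))
  · obtain ⟨n, hZ, hZ₀⟩ := exists_heart_truncGE_shift_not_isZero tC (hC.bounded X) hX₀
    obtain ⟨Y, hY, hZY⟩ := h _ hZ hZ₀
    refine ⟨Y, fun hXY ↦ hZY ?_⟩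
    exact (F.flip.obj Y).kernel.le_shift n _ ((hF Y hY).kernel_truncGE_obj hXY n)

/-- `K` is a faithful `T`-module category iff the heart `H_{t'}` is
a faithful `H_t`-module category. -/
theorem faithful_iff_heart_faithful
    (T : Type*) [Category T] [HasZeroObject T] [Preadditive T] [HasShift T ℤ]
    [∀ n : ℤ, (shiftFunctor T n).Additive] [Pretriangulated T]
    [MonoidalCategory T] [MonoidalTriangulated T]
    (K : Type*) [Category K] [HasZeroObject K] [Preadditive K] [HasShift K ℤ]
    [∀ n : ℤ, (shiftFunctor K n).Additive] [Pretriangulated K]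
    (tm : TriangulatedModuleStruct T K)
    (t : TStructure T) (ht : IsMonoidalTStructure t) (ht0 : (0 : ℤ) ∈ monDev t)
    (t' : TStructure K) (ht' : IsModuleTStructure tm.act t t')
    (ht'0 : (0 : ℤ) ∈ modDev tm.act t t') :
    (∀ X : T, ¬ Limits.IsZero X →
        ∃ M : K, ¬ Limits.IsZero ((tm.act.obj X).obj M)) ↔
      (∀ X : T, heartP t X → ¬ Limits.IsZero X →
        ∃ M : K, heartP t' M ∧ ¬ Limits.IsZero ((tm.act.obj X).obj M)) := by
  let := tm.commShift_obj
  have := tm.triangulated_obj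
  let := tm.commShift_flip
  have := tm.triangulated_flip
  exact faithful_iff_heart_faithful_general tm.act ht.1 ht'.1 fun M hM ↦
    ⟨fun X hX ↦ ht'0.1 X M hX hM.1, fun X hX ↦ ht'0.2 X M hX hM.2⟩
end

section
/- Let F: K₁ → K₂ be a full and dense triangulated functor between triangulated categories, and let t = (K₁^{≤0}, K₁^{≥0}) be a t-structure on K₁. Define full subcategories of K₂: U := {X ∈ K₂ | there exists X′ ∈ K₁^{≤0} with F(X′) ≅ X} and V := {Y ∈ K₂ | there exists Y′ ∈ K₁^{≥0} with F(Y′) ≅ Y}. Then (U, V) is a t-structure on K₂. Moreover, if t is bounded, then (U, V) is bounded. -/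
/-!
STATEMENT 17: Let `F : K₁ → K₂` be a full and dense (essentially surjective)
triangulated functor between triangulated categories and `t` a t-structure on `K₁`.
Define `U := {X ∈ K₂ | ∃ X' ∈ K₁^{≤0}, F(X') ≅ X}` and
`V := {Y ∈ K₂ | ∃ Y' ∈ K₁^{≥0}, F(Y') ≅ Y}`. Then `(U, V)` is a t-structure on `K₂`;
moreover if `t` is bounded then so is `(U, V)`.

The induced t-structure is encoded as a `TStructure` on `K₂` whose `≤ n` and `≥ n`
parts are the essential images of `K₁^{≤n}` and `K₁^{≥n}` under `F` (which for
`n = 0` are exactly `U` and `V`).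
-/

open CategoryTheory Category Limits Pretriangulated MonoidalCategory ZeroObject
open CategoryTheory.Triangulated

open DerivedModule

/-!
Since `F` is full, a morphism `F X' ⟶ F Y'` lifts to `X' ⟶ Y'`, so orthogonality of `≤ 0` and `≥ 1`
passes to the essential images, even though `F` need not be faithful. Since `F` is dense, an object
of `K₂` gets its truncation triangle and its bounds from those of a preimage.
-/

namespace DerivedModule

section EssentialImage

variable {C D : Type*} [Category C] [Category D] (F : C ⥤ D)

lemma map_le_leftOrthogonal_map [HasZeroMorphisms C] [HasZeroMorphisms D]
    [F.PreservesZeroMorphisms] [F.Full] {P Q : ObjectProperty C} (h : P ≤ Q.leftOrthogonal) :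
    P.map F ≤ (Q.map F).leftOrthogonal := by
  rintro X ⟨X', hX', ⟨i⟩⟩ Y f ⟨Y', hY', ⟨j⟩⟩
  obtain ⟨g, hg⟩ := F.map_surjective (i.hom ≫ f ≫ j.inv)
  have hg_zero : g = 0 := h X' hX' g hY'
  rw [← cancel_epi i.hom, ← cancel_mono j.inv, Category.assoc, ← hg, hg_zero]
  simp

lemma map_shift_le {A : Type*} [AddMonoid A] [HasShift C A] [HasShift D A] [F.CommShift A]
    (P : ObjectProperty C) (a : A) : (P.shift a).map F ≤ (P.map F).shift a := by
  rintro _ ⟨X, hX, ⟨e⟩⟩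
  exact ⟨X⟦a⟧, hX, ⟨(F.commShiftIso a).app X ≪≫ (shiftFunctor D a).mapIso e⟩⟩

lemma exists_prop_map [F.EssSurj] {ι : Sort*} {P : ι → ObjectProperty C}
    (h : ∀ X : C, ∃ i, P i X) (Y : D) : ∃ i, (P i).map F Y :=
  (h (F.objPreimage Y)).imp fun _ hi ↦ ⟨_, hi, ⟨F.objObjPreimageIso Y⟩⟩

end EssentialImage

section Triangulated

variable {C D : Type*} [Category C] [HasZeroObject C] [Preadditive C] [HasShift C ℤ]
  [∀ n : ℤ, (shiftFunctor C n).Additive] [Pretriangulated C]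
  [Category D] [HasZeroObject D] [Preadditive D] [HasShift D ℤ]
  [∀ n : ℤ, (shiftFunctor D n).Additive] [Pretriangulated D]
  (F : C ⥤ D) [F.CommShift ℤ] [F.IsTriangulated]

lemma map_extensionProduct_le (P Q : ObjectProperty C) :
    (P.extensionProduct Q).map F ≤ (P.map F).extensionProduct (Q.map F) := by
  rintro A ⟨B, ⟨X, Y, f, g, h, hT, hX, hY⟩, ⟨e⟩⟩
  exact ObjectProperty.prop_of_iso _ e
    ⟨F.obj X, F.obj Y, _, _, _, F.map_distinguished _ hT, P.prop_map_obj F hX, Q.prop_map_obj F hY⟩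

variable [F.Full] [F.EssSurj] (t : TStructure C)

/-- The image of a t-structure under a full and essentially surjective triangulated functor: its
`≤ n` and `≥ n` parts are the essential images of those of `t`. -/
def imageTStructure : TStructure D where
  le n := (t.le n).map F
  ge n := (t.ge n).map F
  le_shift n a n' h X hX :=
    map_shift_le F (t.le n') a X (ObjectProperty.map_monotone (t.le_shift n a n' h) F X hX)
  ge_shift n a n' h X hX :=
    map_shift_le F (t.ge n') a X (ObjectProperty.map_monotone (t.ge_shift n a n' h) F X hX)
  zero' _ _ f hX hY :=
    map_le_leftOrthogonal_map F (fun _ hX' _ g hY' ↦ t.zero' g hX' hY') _ hX f hY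
  le_zero_le := ObjectProperty.map_monotone t.le_zero_le F
  ge_one_le := ObjectProperty.map_monotone t.ge_one_le F
  exists_triangle_zero_one A := by
    obtain ⟨X, Y, hX, hY, f, g, h, hT⟩ := t.exists_triangle_zero_one (F.objPreimage A)
    obtain ⟨U, V, u, v, w, hT', hU, hV⟩ := map_extensionProduct_le F (t.le 0) (t.ge 1) A
      ⟨_, ⟨X, Y, f, g, h, hT, hX, hY⟩, ⟨F.objObjPreimageIso A⟩⟩
    exact ⟨U, V, hU, hV, u, v, w, hT'⟩

variable {t} in
lemma tBounded.imageTStructure (ht : tBounded t) : tBounded (imageTStructure F t) :=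
  ⟨exists_prop_map F ht.1, exists_prop_map F ht.2⟩

end Triangulated

end DerivedModule

/-- A full and dense triangulated functor transports a t-structure;
boundedness is preserved. -/
theorem tStructure_of_full_dense_triangulated_functor
    (K₁ : Type*) [Category K₁] [HasZeroObject K₁] [Preadditive K₁] [HasShift K₁ ℤ]
    [∀ n : ℤ, (shiftFunctor K₁ n).Additive] [Pretriangulated K₁]
    (K₂ : Type*) [Category K₂] [HasZeroObject K₂] [Preadditive K₂] [HasShift K₂ ℤ]
    [∀ n : ℤ, (shiftFunctor K₂ n).Additive] [Pretriangulated K₂]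
    (F : K₁ ⥤ K₂) [F.CommShift ℤ] [F.IsTriangulated] [F.Full] [F.EssSurj]
    (t : TStructure K₁) :
    ∃ t₂ : TStructure K₂,
      (∀ (n : ℤ) (X : K₂), t₂.le n X ↔
        ∃ X' : K₁, t.le n X' ∧ Nonempty (F.obj X' ≅ X)) ∧
      (∀ (n : ℤ) (Y : K₂), t₂.ge n Y ↔
        ∃ Y' : K₁, t.ge n Y' ∧ Nonempty (F.obj Y' ≅ Y)) ∧
      (tBounded t → tBounded t₂) :=
  ⟨imageTStructure F t, fun n ↦ (t.le n).prop_map_iff F, fun n ↦ (t.ge n).prop_map_iff F,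
    tBounded.imageTStructure F⟩
end
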